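/- Let n, L be positive natural numbers, let l be a natural number with 1 ≤ l < L, let a, b_l, …, b_L ∈ ℝ^n, and suppose the family of vectors (a − b_{l′})_{l′=l}^{L} is linearly independent (so it contains at least two vectors). Then for every x ∈ ℝ^n and every l₀ with l ≤ l₀ ≤ L, the gradient ∇H(x) = (1/L) ∑_{l′=l}^{L} (σ(⟨x, a − b_{l′}⟩) − 1)(a − b_{l′}) of the MNS loss is not a scalar multiple of a − b_{l₀}; in particular it differs in direction from the gradient (σ(⟨x, a − b_{l₀}⟩) − 1)(a − b_{l₀}) of the BPR loss built from the single negative b_{l₀}. -/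

import Mathlib

open scoped RealInnerProductSpace

/-- The logistic sigmoid `σ(x) = 1 / (1 + exp (-x))`. -/
noncomputable def sigmoid (x : ℝ) : ℝ := 1 / (1 + Real.exp (-x))

/-- If the difference vectors `(a - b_{l'})_{l'=l}^{L}` are
linearly independent (with `l < L`, so there are at least two of them), then
the gradient of the MNS loss,
`∇H(x) = (1/L) ∑_{l'=l}^{L} (σ(⟪x, a - b_{l'}⟫) - 1) • (a - b_{l'})`, is not a
scalar multiple of `a - b_{l₀}` for any level `l ≤ l₀ ≤ L`; in particular it
differs in direction from the gradient of the BPR loss built from the single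
negative `b_{l₀}`. -/
theorem mns_gradient_not_scalar_multiple (n L l : ℕ)
    (hn : 0 < n) (hL : 0 < L) (hl : 1 ≤ l) (hlL : l < L)
    (a : EuclideanSpace ℝ (Fin n)) (b : ℕ → EuclideanSpace ℝ (Fin n))
    (hind : LinearIndependent ℝ
      (fun l' : (Finset.Icc l L : Finset ℕ) => a - b (l' : ℕ))) :
    ∀ x : EuclideanSpace ℝ (Fin n), ∀ l₀ : ℕ, l ≤ l₀ → l₀ ≤ L →
      (¬ ∃ c : ℝ,
        (1 / (L : ℝ)) •
            ∑ l' ∈ Finset.Icc l L, (sigmoid ⟪x, a - b l'⟫ - 1) • (a - b l') =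
          c • (a - b l₀)) ∧
      (1 / (L : ℝ)) •
          ∑ l' ∈ Finset.Icc l L, (sigmoid ⟪x, a - b l'⟫ - 1) • (a - b l') ≠
        (sigmoid ⟪x, a - b l₀⟫ - 1) • (a - b l₀) := by
  intro x l₀ h1 h2
  have key : ¬ ∃ c : ℝ,
        (1 / (L : ℝ)) •
            ∑ l' ∈ Finset.Icc l L, (sigmoid ⟪x, a - b l'⟫ - 1) • (a - b l') =
          c • (a - b l₀) := by
    rintro ⟨c, hc⟩
    have hm : l₀ ∈ Finset.Icc l L := Finset.mem_Icc.mpr ⟨h1, h2⟩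
    obtain ⟨k, hk, hne⟩ : ∃ k ∈ Finset.Icc l L, k ≠ l₀ := by
      by_cases h : l₀ = l
      · exact ⟨L, Finset.mem_Icc.mpr ⟨hlL.le, le_rfl⟩, by omega⟩
      · exact ⟨l, Finset.mem_Icc.mpr ⟨le_rfl, hlL.le⟩, by omega⟩
    have hlin := Fintype.linearIndependent_iff.mp hind
      (fun i => (1 / (L : ℝ)) * (sigmoid ⟪x, a - b i⟫ - 1) - if (i : ℕ) = l₀ then c else 0) (by
        rw [Finset.sum_coe_sort (Finset.Icc l L) (fun i : ℕ =>
          ((1 / (L : ℝ)) * (sigmoid ⟪x, a - b i⟫ - 1) - if i = l₀ then c else 0) • (a - b i))]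
        simp only [sub_smul _ (ite _ _ _), mul_smul, Finset.sum_sub_distrib, ite_smul, zero_smul]
        rw [← Finset.smul_sum, hc, Finset.sum_ite_eq' , if_pos hm, sub_self]) ⟨k, hk⟩
    simp only [hne, if_false, sub_zero] at hlin
    have hLr : (0 : ℝ) < 1 / (L : ℝ) := by positivity
    have hs : sigmoid ⟪x, a - b k⟫ < 1 := by
      unfold sigmoid
      have := Real.exp_pos (-⟪x, a - b k⟫)
      rw [div_lt_one (by linarith)]
      linarith
    nlinarith
  exact ⟨key, fun h => key ⟨_, h⟩⟩
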